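/- arXiv:1403.5389 — 2 statements merged into one kernel-verified Lean document; each statement's English description precedes it below -/
import Mathlib

section
/- There exists an odd primitive singular number. That is, there exists an odd positive integer x such that x is a singular number and every divisor x' of x with x' ≠ x is a nonsingular number. -/
/-- The Möbius function of the poset `(S, ∣)` of a finite set `S` of positive integers
ordered by divisibility: `mobiusOn S y y = 1` and, for `y ∣ x`, `y ≠ x`,
`mobiusOn S y x = -∑_{z ∈ S, y ∣ z ∣ x, z ≠ x} mobiusOn S y z`. -/
def mobiusOn (S : Finset ℕ) (y : ℕ) : ℕ → ℤ
  | x =>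
    if x = y then 1
    else if hx : x = 0 then 0
    else
      -∑ z ∈ (S.filter fun z => y ∣ z ∧ z ∣ x ∧ z ≠ x).attach,
        mobiusOn S y z.1
termination_by x => x
decreasing_by
  have hz := z.2
  simp only [Finset.mem_filter] at hz
  exact lt_of_le_of_ne (Nat.le_of_dvd (Nat.pos_of_ne_zero hx) hz.2.2.1) hz.2.2.2

/-- A finite set of naturals is GCD closed if it is closed under taking gcd's. -/
def IsGcdClosed (S : Finset ℕ) : Prop := ∀ a ∈ S, ∀ b ∈ S, Nat.gcd a b ∈ S

/-- `Ψ_{S,1/N}(x) = ∑_{y ∈ S, y ∣ x} μ_S(y, x) / y`. -/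
noncomputable def PsiInvN (S : Finset ℕ) (x : ℕ) : ℝ :=
  ∑ y ∈ S.filter (· ∣ x), (mobiusOn S y x : ℝ) / (y : ℝ)

/-- A positive integer `x` is a singular number if there is a GCD closed set `S` of
positive integers with greatest element `x` such that `Ψ_{S,1/N}(x) = 0`. -/
def IsSingularNumber (x : ℕ) : Prop :=
  ∃ S : Finset ℕ, (∀ a ∈ S, 0 < a) ∧ IsGcdClosed S ∧ x ∈ S ∧ (∀ a ∈ S, a ≤ x) ∧
    PsiInvN S x = 0

/-!
A singular number that is minimal for divisibility among the divisors of an odd singular number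
is odd and primitive, so it suffices to exhibit one odd singular number. Take `x = 15015` and let
`S` consist of `15015`, the divisors `3`, `55`, `65`, `1001` and the gcd's of these. Then
`Ψ_{S,1/N}(15015) = 1/15015 - (1/3 + 1/55 + 1/65 + 1/1001) + (1/5 + 1/11 + 1/13) = 0`.
The values `μ_S(·, x)` are certified by `∑_{w ∈ S, z ∣ w} μ_S(w, x) = [z = x]`, `z ∈ S`, the
dual of the defining recursion, which determines them because a left inverse of the zeta matrix
is also a right inverse.
-/

open Finset

section Mobius

variable {S : Finset ℕ} {x y : ℕ}

theorem mobiusOn_self (S : Finset ℕ) (x : ℕ) : mobiusOn S x x = 1 := by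
  rw [mobiusOn, if_pos rfl]

theorem mobiusOn_of_ne (S : Finset ℕ) (hx : x ≠ 0) (hxy : x ≠ y) :
    mobiusOn S y x = -∑ z ∈ S with y ∣ z ∧ z ∣ x ∧ z ≠ x, mobiusOn S y z := by
  rw [mobiusOn, if_neg hxy, dif_neg hx, sum_attach _ (mobiusOn S y)]

theorem mobiusOn_eq_zero_of_not_dvd (S : Finset ℕ) (hyx : ¬y ∣ x) : mobiusOn S y x = 0 := by
  have hx : x ≠ 0 := by rintro rfl; exact hyx (dvd_zero y)
  have hxy : x ≠ y := by rintro rfl; exact hyx dvd_rfl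
  have hempty : {z ∈ S | y ∣ z ∧ z ∣ x ∧ z ≠ x} = ∅ :=
    filter_eq_empty_iff.2 fun _ _ hz => hyx (hz.1.trans hz.2.1)
  rw [mobiusOn_of_ne S hx hxy, hempty, sum_empty, neg_zero]

theorem sum_mobiusOn_proper_dvd (S : Finset ℕ) (y x : ℕ) :
    ∑ z ∈ S with z ∣ x ∧ z ≠ x, mobiusOn S y z =
      ∑ z ∈ S with y ∣ z ∧ z ∣ x ∧ z ≠ x, mobiusOn S y z := by
  refine (sum_subset (monotone_filter_right S fun _ _ hz => hz.2) fun z hz hz' => ?_).symm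
  refine mobiusOn_eq_zero_of_not_dvd S fun hyz => hz' ?_
  exact mem_filter.2 ⟨(mem_filter.1 hz).1, hyz, (mem_filter.1 hz).2⟩

theorem sum_mobiusOn_dvd (hx : x ≠ 0) (hxS : x ∈ S) (y : ℕ) :
    ∑ z ∈ S with z ∣ x, mobiusOn S y z = if x = y then 1 else 0 := by
  have hsplit : {z ∈ S | z ∣ x} = insert x {z ∈ S | z ∣ x ∧ z ≠ x} := by
    ext z
    by_cases hz : z = x <;> simp [hz, hxS]
  rw [hsplit, sum_insert (by simp), sum_mobiusOn_proper_dvd]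
  split_ifs with hxy
  · subst hxy
    have hempty : {z ∈ S | x ∣ z ∧ z ∣ x ∧ z ≠ x} = ∅ :=
      filter_eq_empty_iff.2 fun _ _ hz => hz.2.2 (dvd_antisymm hz.2.1 hz.1)
    rw [mobiusOn_self, hempty, sum_empty, add_zero]
  · rw [mobiusOn_of_ne S hx hxy, neg_add_cancel]

theorem mobiusOn_eq_of_sum_multiples_eq (hS : 0 ∉ S) (hx : x ∈ S) {c : ℕ → ℤ}
    (hc : ∀ z ∈ S, ∑ w ∈ S with z ∣ w, c w = if z = x then 1 else 0) (hy : y ∈ S) :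
    mobiusOn S y x = c y := by
  calc mobiusOn S y x
      = ∑ z ∈ S, mobiusOn S y z * ∑ w ∈ S with z ∣ w, c w := by
        rw [sum_congr rfl fun z hz => by rw [hc z hz]]
        simp [hx]
    _ = ∑ w ∈ S, (∑ z ∈ S with z ∣ w, mobiusOn S y z) * c w := by
        simp only [mul_sum, sum_mul, sum_filter]
        rw [sum_comm]
        exact sum_congr rfl fun w _ => sum_congr rfl fun z _ => by split_ifs <;> simp
    _ = ∑ w ∈ S, (if w = y then 1 else 0) * c w :=
        sum_congr rfl fun w hw => by rw [sum_mobiusOn_dvd (ne_of_mem_of_not_mem hw hS) hw]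
    _ = c y := by simp [hy]

theorem PsiInvN_eq_sum_of_sum_multiples_eq (hS : 0 ∉ S) (hx : x ∈ S) {c : ℕ → ℤ}
    (hc : ∀ z ∈ S, ∑ w ∈ S with z ∣ w, c w = if z = x then 1 else 0) :
    PsiInvN S x = ∑ y ∈ S, (c y : ℝ) / y := by
  have hextend : PsiInvN S x = ∑ y ∈ S, (mobiusOn S y x : ℝ) / y :=
    sum_filter_of_ne fun y _ hne => by
      contrapose! hne
      rw [mobiusOn_eq_zero_of_not_dvd S hne, Int.cast_zero, zero_div]
  rw [hextend]
  exact sum_congr rfl fun y hy => by rw [mobiusOn_eq_of_sum_multiples_eq hS hx hc hy]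

end Mobius

theorem IsSingularNumber.pos {x : ℕ} (hx : IsSingularNumber x) : 0 < x := by
  obtain ⟨S, hpos, -, hxS, -⟩ := hx
  exact hpos x hxS

theorem IsSingularNumber.exists_primitive_dvd {x : ℕ} (hx : IsSingularNumber x) :
    ∃ d, d ∣ x ∧ IsSingularNumber d ∧ ∀ e, e ∣ d → e ≠ d → ¬IsSingularNumber e := by
  induction x using Nat.strong_induction_on with
  | _ x ih =>
    by_cases hprim : ∀ e, e ∣ x → e ≠ x → ¬IsSingularNumber e
    · exact ⟨x, dvd_rfl, hx, hprim⟩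
    · push Not at hprim
      obtain ⟨e, hex, hne, he⟩ := hprim
      obtain ⟨d, hde, hd⟩ := ih e ((Nat.le_of_dvd hx.pos hex).lt_of_ne hne) he
      exact ⟨d, hde.trans hex, hd⟩

/-- The gcd closed set generated by `15015` and its divisors `3`, `55`, `65`, `1001`, which
witnesses that `15015 = 3 * 5 * 7 * 11 * 13` is singular. -/
def singularWitness : Finset ℕ := {1, 3, 5, 11, 13, 55, 65, 1001, 15015}

/-- The values `μ_S(·, 15015)` on `S = singularWitness`. They are `1` on `15015` and on the
pairwise gcd's `5`, `11`, `13`, and `-1` on the maximal proper elements; outside `S` the value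
is junk. -/
def mobiusColumnWitness (y : ℕ) : ℤ :=
  if y = 1 then 0 else if y ∈ ({3, 55, 65, 1001} : Finset ℕ) then -1 else 1

theorem isGcdClosed_singularWitness : IsGcdClosed singularWitness := by
  unfold IsGcdClosed
  decide

theorem sum_multiples_mobiusColumnWitness :
    ∀ z ∈ singularWitness, ∑ w ∈ singularWitness with z ∣ w, mobiusColumnWitness w =
      if z = 15015 then 1 else 0 := by
  decide

theorem PsiInvN_singularWitness : PsiInvN singularWitness 15015 = 0 := by
  rw [PsiInvN_eq_sum_of_sum_multiples_eq (by decide) (by decide) sum_multiples_mobiusColumnWitness]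
  norm_num [singularWitness, mobiusColumnWitness]

theorem isSingularNumber_15015 : IsSingularNumber 15015 :=
  ⟨singularWitness, by decide, isGcdClosed_singularWitness, by decide, by decide,
    PsiInvN_singularWitness⟩

/-- There exists an odd primitive singular number: an odd positive integer `x` which is
a singular number while every proper divisor of `x` is a nonsingular number. -/
theorem stmt_5 :
    ∃ x : ℕ, 0 < x ∧ Odd x ∧ IsSingularNumber x ∧
      ∀ x' : ℕ, x' ∣ x → x' ≠ x → ¬IsSingularNumber x' := by
  have hodd : Odd 15015 := by decide
  obtain ⟨d, hd, hsing, hprim⟩ := isSingularNumber_15015.exists_primitive_dvd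
  exact ⟨d, hsing.pos, hodd.of_dvd_nat hd, hsing, hprim⟩
end

section
/- Let S = {x_1, …, x_n} be a GCD closed set of positive integers such that in the poset (S, |) of S under divisibility, every element covers at most one element of S. Then for every real number α > 0, the power LCM matrix with ij-entry lcm(x_i, x_j)^α is nonsingular (its determinant is nonzero). -/
/-!
Since `lcm a b * gcd a b = a * b`, the power LCM matrix is `D * M * D` with `D` diagonal and
invertible and `M i j = f (i ⊓ j)`, where `f i = x i ^ (-α)` and `⊓` is the gcd. Suppose
`M *ᵥ w = 0`. If `p` is the only element covered by `i`, then `i ⊓ j = p ⊓ j` unless `i ≤ j`, so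
subtracting row `p` from row `i` leaves `(f i - f p) * ∑ j ≥ i, w j = 0`; the row of the minimum
reads `f i * ∑ j ≥ i, w j = 0`. Hence all upper sums of `w` vanish, and `w = 0` follows by
descending induction.
-/

open Matrix

section MeetMatrix

variable {ι R : Type*}

/-- The meet matrix of `f` on a meet semilattice, with entries `f (i ⊓ j)`. Taking the whole
semilattice as index type encodes the meet-closedness of the underlying set. -/
def meetMatrix [SemilatticeInf ι] (f : ι → R) : Matrix ι ι R :=
  of fun i j => f (i ⊓ j)

theorem inf_eq_inf_of_covBy_of_not_le [SemilatticeInf ι] [IsStronglyCoatomic ι] {i j p : ι}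
    (hunique : ∀ q, q ⋖ i → q = p) (hp : p ⋖ i) (hij : ¬i ≤ j) : i ⊓ j = p ⊓ j := by
  obtain ⟨q, hq, hqi⟩ := exists_le_covBy_of_lt (inf_lt_left.mpr hij)
  have inf_le : i ⊓ j ≤ p := hunique q hqi ▸ hq
  exact le_antisymm (le_inf inf_le inf_le_right) (inf_le_inf_right j hp.le)

theorem eq_zero_of_sum_ge_eq_zero [PartialOrder ι] [Fintype ι] [DecidableLE ι]
    [AddCommMonoid R] {w : ι → R} (hw : ∀ i, ∑ j with i ≤ j, w j = 0) : w = 0 := by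
  funext i
  induction i using WellFoundedGT.induction with
  | ind i ih =>
    calc w i = ∑ j with i ≤ j, w j := by
          refine (Finset.sum_eq_single_of_mem i (by simp) fun j hj hji => ?_).symm
          exact ih j ((Finset.mem_filter.mp hj).2.lt_of_ne' hji)
      _ = 0 := hw i

variable [SemilatticeInf ι] [Fintype ι]

theorem meetMatrix_mulVec_of_isMin [DecidableLE ι] [NonUnitalNonAssocSemiring R]
    (f w : ι → R) {i : ι} (hi : IsMin i) :
    (meetMatrix f *ᵥ w) i = f i * ∑ j with i ≤ j, w j := by
  have inf_eq (j : ι) : i ⊓ j = i := hi.eq_of_le inf_le_left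
  have filter_eq : ({j | i ≤ j} : Finset ι) = Finset.univ :=
    Finset.filter_true_of_mem fun j _ => inf_eq_left.mp (inf_eq j)
  simp only [meetMatrix, mulVec, dotProduct, of_apply, inf_eq, filter_eq, Finset.mul_sum]

theorem meetMatrix_mulVec_sub_of_covBy [DecidableLE ι] [NonUnitalNonAssocRing R]
    (f w : ι → R) {i p : ι} (hunique : ∀ q, q ⋖ i → q = p) (hp : p ⋖ i) :
    (meetMatrix f *ᵥ w) i - (meetMatrix f *ᵥ w) p = (f i - f p) * ∑ j with i ≤ j, w j := by
  simp only [meetMatrix, mulVec, dotProduct, of_apply]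
  rw [← Finset.sum_sub_distrib, Finset.mul_sum, Finset.sum_filter]
  refine Finset.sum_congr rfl fun j _ => ?_
  split_ifs with hij
  · rw [inf_eq_left.mpr hij, inf_eq_left.mpr (hp.le.trans hij), sub_mul]
  · rw [inf_eq_inf_of_covBy_of_not_le hunique hp hij, sub_self]

theorem sum_ge_eq_zero_of_meetMatrix_mulVec_eq_zero [DecidableLE ι] [NonUnitalNonAssocRing R]
    [NoZeroDivisors R] {f w : ι → R} (hunique : ∀ i j k : ι, j ⋖ i → k ⋖ i → j = k)
    (hmin : ∀ i, IsMin i → f i ≠ 0) (hcov : ∀ i j, j ⋖ i → f i ≠ f j)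
    (hw : meetMatrix f *ᵥ w = 0) (i : ι) : ∑ j with i ≤ j, w j = 0 := by
  by_cases hi : IsMin i
  · have row := meetMatrix_mulVec_of_isMin f w hi
    rw [hw, Pi.zero_apply, zero_eq_mul] at row
    exact row.resolve_left (hmin i hi)
  · obtain ⟨d, hd⟩ := not_isMin_iff.mp hi
    obtain ⟨p, -, hp⟩ := exists_le_covBy_of_lt hd
    have rows := meetMatrix_mulVec_sub_of_covBy f w (fun q hq => hunique i q p hq hp) hp
    rw [hw, Pi.zero_apply, Pi.zero_apply, sub_zero, zero_eq_mul] at rows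
    exact rows.resolve_left (sub_ne_zero.mpr (hcov i p hp))

theorem det_meetMatrix_ne_zero [DecidableEq ι] [CommRing R] [IsDomain R] {f : ι → R}
    (hunique : ∀ i j k : ι, j ⋖ i → k ⋖ i → j = k)
    (hmin : ∀ i, IsMin i → f i ≠ 0) (hcov : ∀ i j, j ⋖ i → f i ≠ f j) :
    (meetMatrix f).det ≠ 0 := by
  classical
  intro hdet
  obtain ⟨w, hw_ne, hw⟩ := exists_mulVec_eq_zero_iff.mpr hdet
  exact hw_ne <| eq_zero_of_sum_ge_eq_zero <|
    sum_ge_eq_zero_of_meetMatrix_mulVec_eq_zero hunique hmin hcov hw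

end MeetMatrix

section GcdClosed

variable {ι : Type*} {x : ι → ℕ}

/-- The divisibility order on a GCD closed set of naturals enumerated injectively by `x`,
carried by the index type. Meets are the indices of the gcds. -/
noncomputable abbrev gcdClosedSemilatticeInf (hinj : Function.Injective x)
    (hgcd : ∀ i j, ∃ k, x k = Nat.gcd (x i) (x j)) : SemilatticeInf ι where
  le i j := x i ∣ x j
  le_refl i := dvd_refl (x i)
  le_trans _ _ _ := dvd_trans
  le_antisymm _ _ hij hji := hinj (Nat.dvd_antisymm hij hji)
  inf i j := (hgcd i j).choose
  inf_le_left i j := (hgcd i j).choose_spec.dvd.trans (Nat.gcd_dvd_left (x i) (x j))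
  inf_le_right i j := (hgcd i j).choose_spec.dvd.trans (Nat.gcd_dvd_right (x i) (x j))
  le_inf _ i j hi hj := (Nat.dvd_gcd hi hj).trans (hgcd i j).choose_spec.symm.dvd

theorem dvd_and_ne_and_forall_of_covBy (hinj : Function.Injective x)
    (hgcd : ∀ i j, ∃ k, x k = Nat.gcd (x i) (x j)) {i j : ι}
    (hji : letI := gcdClosedSemilatticeInf hinj hgcd; j ⋖ i) :
    x j ∣ x i ∧ x j ≠ x i ∧ ∀ l, x j ∣ x l → x l ∣ x i → x l = x j ∨ x l = x i := by
  let := gcdClosedSemilatticeInf hinj hgcd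
  exact ⟨hji.le, hinj.ne hji.ne, fun l hjl hli =>
    (hji.eq_or_eq hjl hli).imp (congrArg x) (congrArg x)⟩

theorem natCast_lcm_rpow {a b : ℕ} (ha : 0 < a) (α : ℝ) :
    (Nat.lcm a b : ℝ) ^ α = (a : ℝ) ^ α * (Nat.gcd a b : ℝ) ^ (-α) * (b : ℝ) ^ α := by
  have gcd_pos : (0 : ℝ) < Nat.gcd a b := Nat.cast_pos.mpr (Nat.gcd_pos_of_pos_left b ha)
  have gcd_mul_lcm : (Nat.gcd a b : ℝ) ^ α * (Nat.lcm a b : ℝ) ^ α = (a : ℝ) ^ α * (b : ℝ) ^ α := by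
    rw [← Real.mul_rpow (Nat.cast_nonneg _) (Nat.cast_nonneg _),
      ← Real.mul_rpow (Nat.cast_nonneg _) (Nat.cast_nonneg _)]
    exact_mod_cast congrArg (fun m : ℕ => (m : ℝ) ^ α) (Nat.gcd_mul_lcm a b)
  rw [mul_right_comm, ← gcd_mul_lcm, Real.rpow_neg gcd_pos.le, mul_comm,
    inv_mul_cancel_left₀ (Real.rpow_pos_of_pos gcd_pos α).ne']

theorem lcm_rpow_eq_diagonal_mul_meetMatrix_mul_diagonal [Fintype ι] [DecidableEq ι]
    (hpos : ∀ i, 0 < x i) (hinj : Function.Injective x)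
    (hgcd : ∀ i j, ∃ k, x k = Nat.gcd (x i) (x j)) (α : ℝ) :
    letI := gcdClosedSemilatticeInf hinj hgcd
    (of fun i j => (Nat.lcm (x i) (x j) : ℝ) ^ α) =
      diagonal (fun i => (x i : ℝ) ^ α) * meetMatrix (fun i => (x i : ℝ) ^ (-α)) *
        diagonal (fun i => (x i : ℝ) ^ α) := by
  let := gcdClosedSemilatticeInf hinj hgcd
  ext i j
  have apply_inf : x (i ⊓ j) = Nat.gcd (x i) (x j) := (hgcd i j).choose_spec
  rw [mul_diagonal, diagonal_mul, meetMatrix, of_apply, of_apply, apply_inf,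
    natCast_lcm_rpow (hpos i)]

end GcdClosed

theorem stmt_15_general {ι : Type*} [Fintype ι] [DecidableEq ι] (x : ι → ℕ)
    (hpos : ∀ i, 0 < x i) (hinj : Function.Injective x)
    (hgcd : ∀ i j, ∃ k, x k = Nat.gcd (x i) (x j))
    (htree : ∀ i j k : ι,
      (x j ∣ x i ∧ x j ≠ x i ∧ ∀ l, x j ∣ x l → x l ∣ x i → x l = x j ∨ x l = x i) →
      (x k ∣ x i ∧ x k ≠ x i ∧ ∀ l, x k ∣ x l → x l ∣ x i → x l = x k ∨ x l = x i) →
      j = k)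
    {α : ℝ} (hα : α ≠ 0) :
    (of fun i j => (Nat.lcm (x i) (x j) : ℝ) ^ α).det ≠ 0 := by
  let := gcdClosedSemilatticeInf hinj hgcd
  have rpow_ne_zero (i : ι) (β : ℝ) : (x i : ℝ) ^ β ≠ 0 :=
    (Real.rpow_pos_of_pos (Nat.cast_pos.mpr (hpos i)) β).ne'
  have rpow_injective : Function.Injective fun i => (x i : ℝ) ^ (-α) := fun i j hij =>
    hinj <| Nat.cast_injective <|
      (Real.rpow_left_inj (Nat.cast_nonneg _) (Nat.cast_nonneg _) (neg_ne_zero.mpr hα)).mp hij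
  have det_diagonal_ne_zero : (diagonal fun i => (x i : ℝ) ^ α).det ≠ 0 := by
    rw [det_diagonal]
    exact Finset.prod_ne_zero_iff.mpr fun i _ => rpow_ne_zero i α
  have det_meet_ne_zero : (meetMatrix fun i => (x i : ℝ) ^ (-α)).det ≠ 0 :=
    det_meetMatrix_ne_zero
      (fun i j k hji hki => htree i j k (dvd_and_ne_and_forall_of_covBy hinj hgcd hji)
        (dvd_and_ne_and_forall_of_covBy hinj hgcd hki))
      (fun i _ => rpow_ne_zero i (-α)) (fun _ _ hji => rpow_injective.ne hji.ne')
  rw [lcm_rpow_eq_diagonal_mul_meetMatrix_mul_diagonal hpos hinj hgcd, det_mul, det_mul]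
  exact mul_ne_zero (mul_ne_zero det_diagonal_ne_zero det_meet_ne_zero) det_diagonal_ne_zero

/-- Let `S = {x 0, …, x (n-1)}` be a GCD closed set of positive integers such that in
the divisibility poset `(S, ∣)` every element covers at most one element.  Then for
every real `α > 0` the power LCM matrix `[lcm (x i) (x j) ^ α]` is nonsingular. -/
theorem stmt_15 (n : ℕ) (x : Fin n → ℕ) (hpos : ∀ i, 0 < x i)
    (hinj : Function.Injective x)
    (hgcd : ∀ i j, ∃ k, x k = Nat.gcd (x i) (x j))
    (htree : ∀ i j k : Fin n,
      (x j ∣ x i ∧ x j ≠ x i ∧ ∀ l, x j ∣ x l → x l ∣ x i → x l = x j ∨ x l = x i) →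
      (x k ∣ x i ∧ x k ≠ x i ∧ ∀ l, x k ∣ x l → x l ∣ x i → x l = x k ∨ x l = x i) →
      j = k)
    (α : ℝ) (hα : 0 < α) :
    (Matrix.of fun i j => (Nat.lcm (x i) (x j) : ℝ) ^ α).det ≠ 0 := by
  exact stmt_15_general x hpos hinj hgcd htree hα.ne'
end
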